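/- Let (ϱ,ς) be a direction with ϱ > 0 and ϱ + ς < 0, and let R, G ∈ K[x,y] be (ϱ,ς)-homogeneous polynomials such that R is not a monomial and [G,R] = R^i for some integer i ≥ 1. Set u := v_{ϱ,ς}(R), write (υ₂,ν₂) := st_{ϱ,ς}(R) and (υ₁,ν₁) := en_{ϱ,ς}(R) − st_{ϱ,ς}(R), and put N₁ := gcd(υ₁,ν₁), N₂ := gcd(υ₂,ν₂). Assume there is a positive integer ℓ with ℓ·u + ϱ + ς > 0. Then at least one of the following holds: (1) ϱ = 1 and there exist ξ, λ ∈ K∖{0}, an integer j ≥ 1 and c ∈ ℕ such that R = ξ·x^c·(x^{−ς}y − λ)^j; (2) there exist integers s, t′ with 1 ≤ s ≤ N₁ and 0 < t′ < ℓ·s such that t′·(ϱυ₂ + ςν₂) + s·(ϱ + ς) = 0 (i.e. the direction (ϱ,ς), up to sign, annihilates the point t′·st_{ϱ,ς}(R) + s·(1,1)); (3) there exist integers γ, t′ with γ ≥ 1, γ ∣ N₂ and 0 < t′ < ℓ·γ such that t′·(ϱυ₂ + ςν₂) + γ·(ϱ + ς) = 0. -/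

import Mathlib

open MvPolynomial

noncomputable section

variable {K : Type*} [Field K] [CharZero K]

/-- The support of `P` as a set of pairs `(i,j)` of exponents of `x^i y^j`. -/
def Supp (P : MvPolynomial (Fin 2) K) : Set (ℕ × ℕ) :=
  {p | MvPolynomial.coeff (Finsupp.single 0 p.1 + Finsupp.single 1 p.2) P ≠ 0}

/-- The Jacobian bracket `[P,Q] = ∂ₓP ∂_yQ − ∂ₓQ ∂_yP`. -/
def Jb (P Q : MvPolynomial (Fin 2) K) : MvPolynomial (Fin 2) K :=
  pderiv 0 P * pderiv 1 Q - pderiv 0 Q * pderiv 1 P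

/-- The `(ρ,σ)`-degree `v_{ρ,σ}(P)` (the maximum of `ρi+σj` on the support). -/
def wdeg (ρ σ : ℤ) (P : MvPolynomial (Fin 2) K) : ℤ :=
  sSup {d : ℤ | ∃ p ∈ Supp P, d = ρ * (p.1 : ℤ) + σ * (p.2 : ℤ)}

/-- The support of the `(ρ,σ)`-leading form of `P`. -/
def LeadSupp (ρ σ : ℤ) (P : MvPolynomial (Fin 2) K) : Set (ℕ × ℕ) :=
  {p | p ∈ Supp P ∧ ρ * (p.1 : ℤ) + σ * (p.2 : ℤ) = wdeg ρ σ P}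

/-- `P` is `(ρ,σ)`-homogeneous. -/
def IsHomog (ρ σ : ℤ) (P : MvPolynomial (Fin 2) K) : Prop :=
  ∀ p ∈ Supp P, ∀ q ∈ Supp P,
    ρ * (p.1 : ℤ) + σ * (p.2 : ℤ) = ρ * (q.1 : ℤ) + σ * (q.2 : ℤ)

/-- `P` is a monomial: its support has at most one point. -/
def IsMonomial (P : MvPolynomial (Fin 2) K) : Prop := (Supp P).Subsingleton

/-- `e` is the point `en_{ρ,σ}(P)`: the point of the support of the leading form
with largest second coordinate. -/
def IsEn (ρ σ : ℤ) (P : MvPolynomial (Fin 2) K) (e : ℕ × ℕ) : Prop :=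
  e ∈ LeadSupp ρ σ P ∧ ∀ q ∈ LeadSupp ρ σ P, q.2 ≤ e.2

/-- `e` is the point `st_{ρ,σ}(P)`: the point of the support of the leading form
with smallest second coordinate. -/
def IsSt (ρ σ : ℤ) (P : MvPolynomial (Fin 2) K) (e : ℕ × ℕ) : Prop :=
  e ∈ LeadSupp ρ σ P ∧ ∀ q ∈ LeadSupp ρ σ P, e.2 ≤ q.2

/-- Local analysis of the differential equation at a point `a`. -/
lemma local_mult {L : Type*} [Field L] [CharZero L] (r g : Polynomial L) (hr : r ≠ 0) (hg : g ≠ 0)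
    (w u ρ : ℤ) (hρ : ρ ≠ 0) (i : ℕ)
    (h : Polynomial.C (w : L) * g * Polynomial.derivative r
      - Polynomial.C (u : L) * r * Polynomial.derivative g = Polynomial.C (ρ : L) * r ^ i) (a : L)
    (hne : w * (r.rootMultiplicity a : ℤ) ≠ u * (g.rootMultiplicity a : ℤ)) :
    r.rootMultiplicity a + g.rootMultiplicity a = i * r.rootMultiplicity a + 1 := by
  obtain ⟨r1, hr1, hr1'⟩ := Polynomial.exists_eq_pow_rootMultiplicity_mul_and_not_dvd r hr a
  obtain ⟨g1, hg1, hg1'⟩ := Polynomial.exists_eq_pow_rootMultiplicity_mul_and_not_dvd g hg a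
  generalize r.rootMultiplicity a = m at *
  generalize g.rootMultiplicity a = n at *
  set T := Polynomial.X - Polynomial.C a with hT
  have hTd : Polynomial.derivative T = 1 := by simp [hT]
  have hT0 : T ≠ 0 := Polynomial.X_sub_C_ne_zero a
  have key : ∀ (k : ℕ) (q : Polynomial L), T * Polynomial.derivative (T ^ k * q) =
      T ^ k * (Polynomial.C (k : L) * q + T * Polynomial.derivative q) := by
    intro k q
    rw [Polynomial.derivative_mul, Polynomial.derivative_pow, hTd]
    rcases k with _ | k
    · simp
    · simp only [Nat.add_sub_cancel]
      ring
  have e1 := key m r1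
  have e2 := key n g1
  rw [← hr1] at e1
  rw [← hg1] at e2
  have main : T ^ (m + n) * (Polynomial.C ((w * m - u * n : ℤ) : L) * (r1 * g1)
      + T * (Polynomial.C (w : L) * g1 * Polynomial.derivative r1
        - Polynomial.C (u : L) * r1 * Polynomial.derivative g1)) =
      T ^ (i * m + 1) * (Polynomial.C (ρ : L) * r1 ^ i) := by
    have : T * (Polynomial.C (ρ : L) * r ^ i) = T ^ (i * m + 1) * (Polynomial.C (ρ : L) * r1 ^ i) := by
      rw [hr1, mul_pow, ← pow_mul, mul_comm m i]; ring
    rw [← this, ← h]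
    have : T * (Polynomial.C (w : L) * g * Polynomial.derivative r
      - Polynomial.C (u : L) * r * Polynomial.derivative g) =
      Polynomial.C (w : L) * g * (T * Polynomial.derivative r)
      - Polynomial.C (u : L) * r * (T * Polynomial.derivative g) := by ring
    rw [this, e1, e2]
    conv_rhs => rw [hr1, hg1]
    push_cast
    simp only [map_sub, map_mul]
    ring
  have ndvd : ∀ q : Polynomial L, ¬ T ∣ q → Polynomial.eval a q ≠ 0 := by
    intro q hq h0; exact hq (Polynomial.dvd_iff_isRoot.mpr h0)
  have hr0 := ndvd _ hr1'
  have hg0 := ndvd _ hg1'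
  have hc : ((w * m - u * n : ℤ) : L) ≠ 0 := by
    rw [Int.cast_ne_zero]; exact sub_ne_zero.mpr hne
  have hρ' : (ρ : L) ≠ 0 := by exact_mod_cast hρ
  have hTa : Polynomial.eval a T = 0 := by simp [hT]
  have A : Polynomial.eval a (Polynomial.C ((w * m - u * n : ℤ) : L) * (r1 * g1)
      + T * (Polynomial.C (w : L) * g1 * Polynomial.derivative r1
        - Polynomial.C (u : L) * r1 * Polynomial.derivative g1)) ≠ 0 := by
    rw [Polynomial.eval_add, Polynomial.eval_mul, Polynomial.eval_mul, Polynomial.eval_mul, hTa,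
      zero_mul, add_zero, Polynomial.eval_C]
    exact mul_ne_zero hc (mul_ne_zero hr0 hg0)
  have B : Polynomial.eval a (Polynomial.C (ρ : L) * r1 ^ i) ≠ 0 := by
    rw [Polynomial.eval_mul, Polynomial.eval_C, Polynomial.eval_pow]
    exact mul_ne_zero hρ' (pow_ne_zero _ hr0)
  generalize (Polynomial.C ((w * m - u * n : ℤ) : L) * (r1 * g1)
      + T * (Polynomial.C (w : L) * g1 * Polynomial.derivative r1
        - Polynomial.C (u : L) * r1 * Polynomial.derivative g1)) = P at *
  generalize (Polynomial.C (ρ : L) * r1 ^ i) = Q at *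
  rcases lt_trichotomy (m + n) (i * m + 1) with hlt | heq | hlt
  · exfalso
    obtain ⟨d, hd⟩ := Nat.exists_eq_add_of_lt hlt
    rw [hd, add_assoc (m + n), pow_add T (m + n), mul_assoc (T ^ (m + n))] at main
    have := mul_left_cancel₀ (pow_ne_zero _ hT0) main
    apply A; rw [this]; simp [hTa]
  · exact heq
  · exfalso
    obtain ⟨d, hd⟩ := Nat.exists_eq_add_of_lt hlt
    rw [hd, add_assoc (i * m + 1), pow_add T (i * m + 1), mul_assoc (T ^ (i * m + 1))] at main
    have := mul_left_cancel₀ (pow_ne_zero _ hT0) main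
    apply B; rw [← this]; simp [hTa]

/-- Degree bound coming from the differential equation. -/
lemma deg_bound {L : Type*} [Field L] [CharZero L] (r g : Polynomial L) (hr : r ≠ 0) (hg : g ≠ 0)
    (w u ρ δ : ℤ) (i : ℕ) (hi : 1 ≤ i) (hu : 0 < u) (hδ : δ < 0) (hw : w = ((i : ℤ) - 1) * u + δ)
    (h : Polynomial.C (w : L) * g * Polynomial.derivative r
      - Polynomial.C (u : L) * r * Polynomial.derivative g = Polynomial.C (ρ : L) * r ^ i) :
    g.natDegree ≤ (i - 1) * r.natDegree + 1 := by
  by_contra hcon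
  push Not at hcon
  obtain ⟨k, rfl⟩ := Nat.exists_eq_add_of_le' hi
  simp only [Nat.add_sub_cancel] at hcon
  have hX : ∀ p : Polynomial L, (Polynomial.X * Polynomial.derivative p).natDegree ≤ p.natDegree ∧
      (Polynomial.X * Polynomial.derivative p).coeff p.natDegree = p.natDegree * p.leadingCoeff := by
    intro p
    have hco : ∀ j, (Polynomial.X * Polynomial.derivative p).coeff j = j * p.coeff j := by
      intro j
      rcases j with _ | j
      · simp
      · rw [Polynomial.coeff_X_mul, Polynomial.coeff_derivative]; push_cast; ring
    refine ⟨?_, hco _⟩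
    rw [Polynomial.natDegree_le_iff_coeff_eq_zero]
    intro N hN
    rw [hco, Polynomial.coeff_eq_zero_of_natDegree_lt hN, mul_zero]
  have h2 : Polynomial.C (w : L) * (g * (Polynomial.X * Polynomial.derivative r))
      - Polynomial.C (u : L) * ((Polynomial.X * Polynomial.derivative g) * r) =
      Polynomial.C (ρ : L) * (Polynomial.X * r ^ (k + 1)) := by
    linear_combination Polynomial.X * h
  have h3 := congrArg (fun p => Polynomial.coeff p (g.natDegree + r.natDegree)) h2
  simp only [Polynomial.coeff_sub, Polynomial.coeff_C_mul] at h3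
  rw [Polynomial.coeff_mul_add_eq_of_natDegree_le le_rfl (hX r).1,
    Polynomial.coeff_mul_add_eq_of_natDegree_le (hX g).1 le_rfl, (hX r).2, (hX g).2,
    Polynomial.coeff_eq_zero_of_natDegree_lt (p := Polynomial.X * r ^ (k + 1))] at h3
  · have h4 : ((w * r.natDegree - u * g.natDegree : ℤ) : L) * (g.leadingCoeff * r.leadingCoeff) = 0 := by
      push_cast
      simp only [Polynomial.leadingCoeff] at h3 ⊢
      linear_combination h3
    have h5 : (w * r.natDegree - u * g.natDegree : ℤ) = 0 := by
      rcases mul_eq_zero.mp h4 with h | h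
      · exact_mod_cast h
      · exfalso
        simp [hr, hg] at h
    have h6 : (g.natDegree : ℤ) > k * r.natDegree + 1 := by exact_mod_cast hcon
    rw [hw] at h5
    push_cast at h5
    have : (r.natDegree : ℤ) ≥ 0 := by positivity
    nlinarith
  · calc _ ≤ 1 + (k + 1) * r.natDegree := by
          refine Polynomial.natDegree_mul_le.trans ?_
          exact add_le_add Polynomial.natDegree_X_le Polynomial.natDegree_pow_le
      _ < _ := by nlinarith

/-- Multiplicities of nonzero roots of `y^b f(y^ρ)` are bounded by `deg f`. -/
lemma mult_le {L : Type*} [Field L] [CharZero L] (f : Polynomial L) (hf : f ≠ 0) (b ρ : ℕ)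
    (hρ : 0 < ρ) (a : L) (ha : a ≠ 0) :
    (Polynomial.X ^ b * Polynomial.expand L ρ f).rootMultiplicity a ≤ f.natDegree := by
  obtain ⟨q, hq, hq'⟩ := Polynomial.exists_eq_pow_rootMultiplicity_mul_and_not_dvd f hf (a ^ ρ)
  set k := f.rootMultiplicity (a ^ ρ) with hk
  have hq0 : Polynomial.eval (a ^ ρ) q ≠ 0 := fun h0 => hq' (Polynomial.dvd_iff_isRoot.mpr h0)
  have hqne : q ≠ 0 := by rintro rfl; simp at hq0
  have hkdeg : k ≤ f.natDegree := by
    rw [hq, Polynomial.natDegree_mul (pow_ne_zero _ (Polynomial.X_sub_C_ne_zero _)) hqne,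
      Polynomial.natDegree_pow, Polynomial.natDegree_X_sub_C]
    omega
  refine le_trans ?_ hkdeg
  have hE : Polynomial.expand L ρ f =
      (Polynomial.X ^ ρ - Polynomial.C (a ^ ρ)) ^ k * Polynomial.expand L ρ q := by
    conv_lhs => rw [hq]
    simp
  have hexp0 : Polynomial.expand L ρ f ≠ 0 := by
    rwa [Ne, Polynomial.expand_eq_zero hρ]
  have hS0 : (Polynomial.X ^ ρ - Polynomial.C (a ^ ρ) : Polynomial L) ≠ 0 :=
    Polynomial.X_pow_sub_C_ne_zero hρ _
  have hsep : (Polynomial.X ^ ρ - Polynomial.C (a ^ ρ) : Polynomial L).Separable :=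
    Polynomial.separable_X_pow_sub_C _ (by exact_mod_cast hρ.ne') (pow_ne_zero _ ha)
  have h1 := Polynomial.rootMultiplicity_le_one_of_separable hsep a
  have hprod : Polynomial.X ^ b * Polynomial.expand L ρ f ≠ 0 :=
    mul_ne_zero (pow_ne_zero _ Polynomial.X_ne_zero) hexp0
  have hpow : ((Polynomial.X ^ ρ - Polynomial.C (a ^ ρ) : Polynomial L) ^ k).rootMultiplicity a =
      k * (Polynomial.X ^ ρ - Polynomial.C (a ^ ρ) : Polynomial L).rootMultiplicity a := by
    classical
    rw [← Polynomial.count_roots, Polynomial.roots_pow, Multiset.count_nsmul,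
      Polynomial.count_roots]
  rw [Polynomial.rootMultiplicity_mul hprod, hE, Polynomial.rootMultiplicity_mul (hE ▸ hexp0),
    hpow,
    Polynomial.rootMultiplicity_eq_zero (p := Polynomial.X ^ b) (by simp [ha]),
    Polynomial.rootMultiplicity_eq_zero (p := Polynomial.expand L ρ q) (by
      simpa [Polynomial.IsRoot, Polynomial.expand_eval] using hq0)]
  nlinarith

/-- The alternative over an algebraically closed field. -/
lemma univ_alt {L : Type*} [Field L] [CharZero L] [IsAlgClosed L] (r g : Polynomial L)
    (hr : r ≠ 0) (hg : g ≠ 0)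
    (w u ρ δ : ℤ) (hρ : ρ ≠ 0) (i : ℕ) (hi : 1 ≤ i) (hu : 0 < u) (hδ : δ < 0)
    (hw : w = ((i : ℤ) - 1) * u + δ)
    (h : Polynomial.C (w : L) * g * Polynomial.derivative r
      - Polynomial.C (u : L) * r * Polynomial.derivative g = Polynomial.C (ρ : L) * r ^ i)
    (hroot : ∃ a : L, a ≠ 0 ∧ r.IsRoot a) :
    w * (r.rootMultiplicity 0 : ℤ) = u * (g.rootMultiplicity 0 : ℤ) ∨
    ∃ a : L, a ≠ 0 ∧ r.IsRoot a ∧ w * (r.rootMultiplicity a : ℤ) = u * (g.rootMultiplicity a : ℤ) := by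
  classical
  by_contra hcon
  push Not at hcon
  obtain ⟨hc0, hc1⟩ := hcon
  obtain ⟨a, ha, hra⟩ := hroot
  have hD := deg_bound r g hr hg w u ρ δ i hi hu hδ hw h
  obtain ⟨k, rfl⟩ := Nat.exists_eq_add_of_le' hi
  simp only [Nat.add_sub_cancel] at hD
  have hloc0 := local_mult r g hr hg w u ρ hρ _ h 0 hc0
  have hloc : ∀ c : L, c ≠ 0 → r.IsRoot c →
      g.rootMultiplicity c = k * r.rootMultiplicity c + 1 := by
    intro c hc hrc
    have := local_mult r g hr hg w u ρ hρ _ h c (hc1 c hc hrc)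
    rw [add_mul] at this; omega
  have hle : k • r.roots + ({0, a} : Multiset L) ≤ g.roots := by
    rw [Multiset.le_iff_count]
    intro c
    rw [Multiset.count_add, Multiset.count_nsmul, Polynomial.count_roots, Polynomial.count_roots]
    by_cases hc : c = 0
    · subst hc
      have : Multiset.count (0 : L) {0, a} = 1 := by simp [ha.symm]
      rw [this]; rw [add_mul] at hloc0; omega
    · by_cases hrc : r.IsRoot c
      · rw [hloc c hc hrc]
        have : Multiset.count c {0, a} ≤ 1 := by
          simp [hc, Multiset.count_singleton]; split_ifs <;> simp
        omega
      · have hca : c ≠ a := by rintro rfl; exact hrc hra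
        have : Multiset.count c {0, a} = 0 := by simp [hc, hca]
        rw [this, Polynomial.rootMultiplicity_eq_zero hrc]; simp
  have hcard := Multiset.card_le_card hle
  rw [Multiset.card_add, Multiset.card_nsmul,
    (Polynomial.splits_iff_card_roots.mp (IsAlgClosed.splits r))] at hcard
  have := Polynomial.card_roots' g
  simp at hcard
  omega

set_option linter.unusedSectionVars false

lemma coeff_X_mul_pderiv' (j : Fin 2) (P : MvPolynomial (Fin 2) K) (m : Fin 2 →₀ ℕ) :
    coeff m (X j * pderiv j P) = (m j : K) * coeff m P := by
  classical
  rw [coeff_X_mul']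
  split_ifs with h
  · rw [coeff_pderiv]
    have h1 : 1 ≤ m j := Nat.one_le_iff_ne_zero.mpr (Finsupp.mem_support_iff.mp h)
    have : m - Finsupp.single j 1 + Finsupp.single j 1 = m := by
      apply tsub_add_cancel_of_le
      rwa [Finsupp.single_le_iff]
    rw [this]
    have h2 : (((m - Finsupp.single j 1 : Fin 2 →₀ ℕ) j + 1 : ℕ) : K) = (m j : K) := by
      congr 1
      simp; omega
    push_cast at h2
    rw [mul_comm]
    congr 1
  · rw [Finsupp.notMem_support_iff] at h
    simp [h]

lemma weight_two (ρ σ : ℤ) (m : Fin 2 →₀ ℕ) :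
    Finsupp.weight ![ρ, σ] m = ρ * (m 0 : ℤ) + σ * (m 1 : ℤ) := by
  rw [Finsupp.weight_apply, Finsupp.sum_fintype _ _ (by simp)]
  simp [Fin.sum_univ_two, mul_comm]

lemma euler_two (ρ σ w : ℤ) (P : MvPolynomial (Fin 2) K)
    (h : IsWeightedHomogeneous ![ρ, σ] P w) :
    C (ρ : K) * (X 0 * pderiv 0 P) + C (σ : K) * (X 1 * pderiv 1 P) = C (w : K) * P := by
  ext m
  rw [coeff_add, coeff_C_mul, coeff_C_mul, coeff_C_mul, coeff_X_mul_pderiv', coeff_X_mul_pderiv']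
  by_cases hm : coeff m P = 0
  · simp [hm]
  · have := h hm
    rw [weight_two] at this
    rw [← this]; push_cast; ring

lemma mk_eta (m : Fin 2 →₀ ℕ) :
    Finsupp.single 0 (m 0) + Finsupp.single 1 (m 1) = m := by
  ext j; fin_cases j <;> simp

lemma mem_Supp_iff (P : MvPolynomial (Fin 2) K) (m : Fin 2 →₀ ℕ) :
    (m 0, m 1) ∈ Supp P ↔ coeff m P ≠ 0 := by
  simp only [Supp, Set.mem_ofPred]
  rw [mk_eta]

lemma homog_of (ρ σ : ℤ) (P : MvPolynomial (Fin 2) K) (h : IsHomog ρ σ P) (p : ℕ × ℕ)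
    (hp : p ∈ Supp P) : IsWeightedHomogeneous ![ρ, σ] P (ρ * (p.1 : ℤ) + σ * (p.2 : ℤ)) := by
  intro m hm
  rw [weight_two]
  exact h _ ((mem_Supp_iff P m).mpr hm) _ hp

/-- Dehomogenization `x = 1`. -/
def ev (L : Type*) [Field L] [Algebra K L] : MvPolynomial (Fin 2) K →ₐ[K] Polynomial L :=
  aeval ![1, Polynomial.X]

lemma ev_derivative (L : Type*) [Field L] [Algebra K L] (P : MvPolynomial (Fin 2) K) :
    Polynomial.derivative (ev L P) = ev L (pderiv 1 P) := by
  induction P using MvPolynomial.induction_on with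
  | C a => simp [ev, Polynomial.algebraMap_apply]
  | add p q hp hq => simp [hp, hq]
  | mul_X p j hp =>
    rw [map_mul, Polynomial.derivative_mul, hp, pderiv_mul, map_add, map_mul, map_mul]
    congr 2
    fin_cases j <;> simp [ev]

lemma ev_coeff (L : Type*) [Field L] [Algebra K L] (P : MvPolynomial (Fin 2) K) (j : ℕ) :
    (ev L P).coeff j = ∑ m ∈ P.support, if m 1 = j then algebraMap K L (coeff m P) else 0 := by
  conv_lhs => rw [P.as_sum, map_sum, Polynomial.finsetSum_coeff]
  refine Finset.sum_congr rfl fun m _ => ?_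
  rw [ev, aeval_monomial, Finsupp.prod_fintype _ _ (by simp), Fin.prod_univ_two]
  simp [Polynomial.algebraMap_apply, Polynomial.coeff_X_pow, eq_comm]

lemma ev_coeff_ne (L : Type*) [Field L] [Algebra K L] (P : MvPolynomial (Fin 2) K) (j : ℕ)
    (h : (ev L P).coeff j ≠ 0) : ∃ a : ℕ, (a, j) ∈ Supp P := by
  rw [ev_coeff] at h
  obtain ⟨m, hm, hm'⟩ := Finset.exists_ne_zero_of_sum_ne_zero h
  have hj : m 1 = j := by by_contra hj; simp [hj] at hm'
  refine ⟨m 0, ?_⟩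
  rw [← hj, mem_Supp_iff]
  exact mem_support_iff.mp hm

lemma ev_coeff_ne' (L : Type*) [Field L] [Algebra K L] (ρ σ : ℤ) (hρ : 0 < ρ)
    (P : MvPolynomial (Fin 2) K) (hP : IsHomog ρ σ P)
    (p : ℕ × ℕ) (hp : p ∈ Supp P) : (ev L P).coeff p.2 ≠ 0 := by
  rw [ev_coeff, Finset.sum_eq_single (Finsupp.single 0 p.1 + Finsupp.single 1 p.2)]
  · simpa [Supp] using hp
  · intro m hm hne
    rw [if_neg]
    intro h1
    apply hne
    have := hP _ ((mem_Supp_iff P m).mpr (mem_support_iff.mp hm)) _ hp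
    simp only [h1] at this
    have h0 : m 0 = p.1 := by
      have h2 : ρ * (m 0 : ℤ) = ρ * p.1 := by linarith
      exact_mod_cast mul_left_cancel₀ hρ.ne' h2
    rw [← mk_eta m, h0, h1]
  · intro h
    rw [notMem_support_iff] at h
    exact absurd h hp

lemma finish_arith (u δ s t : ℤ) (ℓ : ℕ) (hu : 0 < u) (hδ : δ < 0) (hs : 1 ≤ s)
    (hℓ : 0 < (ℓ : ℤ) * u + δ) (h : t * u + s * δ = 0) :
    0 < t ∧ t < ℓ * s := by
  constructor
  · by_contra hc
    push Not at hc
    nlinarith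
  · have : 0 < (ℓ * s - t) * u := by nlinarith
    have := pos_of_mul_pos_left this hu.le
    linarith

lemma main_alt
    (ϱ ς : ℤ) (hgcd : Int.gcd ϱ ς = 1) (hϱ : 0 < ϱ) (hϱς : ϱ + ς < 0)
    (R G : MvPolynomial (Fin 2) K)
    (hhomR : IsHomog ϱ ς R) (hhomG : IsHomog ϱ ς G)
    (hmono : ¬ IsMonomial R)
    (i : ℕ) (hi : 1 ≤ i) (hbr : Jb G R = R ^ i)
    (υ₂ ν₂ e₁ e₂ : ℕ) (hst : IsSt ϱ ς R (υ₂, ν₂)) (hen : IsEn ϱ ς R (e₁, e₂))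
    (hu : 0 < ϱ * (υ₂ : ℤ) + ς * (ν₂ : ℤ)) :
    (∃ (s : ℕ) (t : ℤ), 1 ≤ s ∧ (s : ℤ) ≤ Int.gcd ((e₁ : ℤ) - (υ₂ : ℤ)) ((e₂ : ℤ) - (ν₂ : ℤ)) ∧
        t * (ϱ * (υ₂ : ℤ) + ς * (ν₂ : ℤ)) + (s : ℤ) * (ϱ + ς) = 0) ∨
    (∃ t : ℤ, t * (ϱ * (υ₂ : ℤ) + ς * (ν₂ : ℤ)) + (Nat.gcd υ₂ ν₂ : ℤ) * (ϱ + ς) = 0) := by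
  obtain ⟨⟨hstS, hstw⟩, hstmin⟩ := hst
  obtain ⟨⟨henS, henw⟩, henmax⟩ := hen
  simp only at hstw henw hstmin henmax
  have hlead : ∀ p ∈ Supp R, p ∈ LeadSupp ϱ ς R := fun p hp =>
    ⟨hp, (hhomR p hp _ hstS).trans hstw⟩
  set u : ℤ := ϱ * (υ₂ : ℤ) + ς * (ν₂ : ℤ) with hudef
  have hRne : R ≠ 0 := by
    rintro rfl
    simp [Supp] at hstS
  have hGne : G ≠ 0 := by
    rintro rfl
    have : R ^ i = 0 := by rw [← hbr]; simp [Jb]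
    exact hRne (pow_eq_zero_iff (by omega) |>.mp this)
  obtain ⟨mG, hmG⟩ := exists_coeff_ne_zero hGne
  set w : ℤ := ϱ * (mG 0 : ℤ) + ς * (mG 1 : ℤ) with hwdef
  have hRhom : IsWeightedHomogeneous ![ϱ, ς] R u := homog_of ϱ ς R hhomR _ hstS
  have hGhom : IsWeightedHomogeneous ![ϱ, ς] G w :=
    homog_of ϱ ς G hhomG _ ((mem_Supp_iff G mG).mpr hmG)
  -- weights
  have hw : w = ((i : ℤ) - 1) * u + (ϱ + ς) := by
    have h1 : IsWeightedHomogeneous ![ϱ, ς] (Jb G R) (w + u - (ϱ + ς)) := by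
      unfold Jb
      apply IsWeightedHomogeneous.sub
      · have := (hGhom.pderiv (i := 0) (n' := w - ϱ) (by simp)).mul
          (hRhom.pderiv (i := 1) (n' := u - ς) (by simp))
        rwa [show w - ϱ + (u - ς) = w + u - (ϱ + ς) by ring] at this
      · have := (hRhom.pderiv (i := 0) (n' := u - ϱ) (by simp)).mul
          (hGhom.pderiv (i := 1) (n' := w - ς) (by simp))
        rwa [show u - ϱ + (w - ς) = w + u - (ϱ + ς) by ring] at this
    have h2 := hRhom.pow i
    rw [hbr] at h1
    have h3 := IsWeightedHomogeneous.inj_right (pow_ne_zero i hRne) h1 h2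
    simp only [nsmul_eq_mul] at h3
    linarith
  have hmv : C (w : K) * G * pderiv 1 R - C (u : K) * R * pderiv 1 G
      = C (ϱ : K) * X 0 * R ^ i := by
    rw [← hbr, Jb]
    linear_combination -(pderiv 1 R) * euler_two ϱ ς w G hGhom
      + (pderiv 1 G) * euler_two ϱ ς u R hRhom
  let L := AlgebraicClosure K
  have : CharZero L := charZero_of_injective_algebraMap (algebraMap K L).injective
  set r := ev L R with hrdef
  set g := ev L G with hgdef
  have hode : Polynomial.C (w : L) * g * Polynomial.derivative r
      - Polynomial.C (u : L) * r * Polynomial.derivative g = Polynomial.C (ϱ : L) * r ^ i := by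
    have := congrArg (ev L) hmv
    rw [hrdef, hgdef, ev_derivative, ev_derivative]
    simp only [map_sub, map_mul, map_pow] at this
    simp only [Polynomial.C_eq_intCast]
    simpa [ev] using this
  have hrS := ev_coeff_ne' L ϱ ς hϱ R hhomR _ hstS
  have hrE := ev_coeff_ne' L ϱ ς hϱ R hhomR _ henS
  rw [← hrdef] at hrS hrE
  simp only at hrS hrE
  have hrne : r ≠ 0 := by intro h; rw [h] at hrS; simp at hrS
  have hgne : g ≠ 0 := by
    have := ev_coeff_ne' L ϱ ς hϱ G hhomG _ ((mem_Supp_iff G mG).mpr hmG)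
    intro h; rw [← hgdef, h] at this; simp at this
  -- the range of exponents of r
  have hrange : ∀ j, r.coeff j ≠ 0 → ν₂ ≤ j ∧ j ≤ e₂ ∧ ϱ ∣ (j : ℤ) - ν₂ := by
    intro j hj
    obtain ⟨a, ha⟩ := ev_coeff_ne L R j hj
    refine ⟨hstmin _ (hlead _ ha), henmax _ (hlead _ ha), ?_⟩
    have h1 : ϱ * (a : ℤ) + ς * (j : ℤ) = u := hhomR _ ha _ hstS
    apply (Int.isCoprime_iff_gcd_eq_one.mpr hgcd).dvd_of_dvd_mul_left
    exact ⟨υ₂ - a, by rw [hudef] at h1; linarith⟩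
  have hse : ν₂ < e₂ := by
    rcases lt_or_eq_of_le (hrange _ hrE).1 with h | h
    · exact h
    · exfalso
      apply hmono
      intro p hp q hq
      have hp2 := hstmin _ (hlead _ hp)
      have hp2' := henmax _ (hlead _ hp)
      have hq2 := hstmin _ (hlead _ hq)
      have hq2' := henmax _ (hlead _ hq)
      have h2 : p.2 = q.2 := by omega
      have h1 := hhomR _ hp _ hq
      rw [h2] at h1
      have h3 : ϱ * (p.1 : ℤ) = ϱ * q.1 := by linarith
      have h4 := mul_left_cancel₀ hϱ.ne' h3
      exact Prod.ext (by exact_mod_cast h4) h2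
  obtain ⟨N, hN⟩ := (hrange _ hrE).2.2
  have hNpos : 0 < N := by
    have : 0 < ϱ * N := by rw [← hN]; omega
    exact pos_of_mul_pos_right this hϱ.le
  have hN1 : (e₁ : ℤ) - υ₂ = -ς * N := by
    have h1 : ϱ * (e₁ : ℤ) + ς * (e₂ : ℤ) = u := hhomR _ henS _ hstS
    have h2 : ϱ * ((e₁ : ℤ) - υ₂) = ϱ * (-ς * N) := by
      rw [hudef] at h1
      linear_combination h1 - ς * hN
    exact mul_left_cancel₀ hϱ.ne' h2
  have hgcdN : (Int.gcd ((e₁ : ℤ) - (υ₂ : ℤ)) ((e₂ : ℤ) - (ν₂ : ℤ)) : ℤ) = N := by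
    rw [hN1, hN, Int.gcd_mul_right, Int.neg_gcd, Int.gcd_comm, hgcd, one_mul]
    omega
  obtain ⟨q, hq⟩ : Polynomial.X ^ ν₂ ∣ r := by
    rw [Polynomial.X_pow_dvd_iff]
    intro d hd
    by_contra hne
    have := (hrange d hne).1
    omega
  have hqc : ∀ n, q.coeff n = r.coeff (n + ν₂) := by
    intro n; rw [hq, Polynomial.coeff_X_pow_mul]
  obtain ⟨ρ, rfl⟩ : ∃ ρ : ℕ, ϱ = ρ := ⟨ϱ.toNat, by omega⟩
  have hρ : 0 < ρ := by exact_mod_cast hϱ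
  set f := Polynomial.contract ρ q with hf
  have hfq : Polynomial.expand L ρ f = q := by
    ext n
    rw [Polynomial.coeff_expand hρ, hf, Polynomial.coeff_contract hρ.ne']
    split_ifs with h
    · rw [Nat.div_mul_cancel h]
    · by_contra hne
      have h1 := (hrange (n + ν₂) (by rw [← hqc]; exact Ne.symm hne)).2.2
      apply h
      have h2 : (ρ : ℤ) ∣ (n : ℤ) := by convert h1 using 1; push_cast; ring
      exact_mod_cast h2
  have hfne : f ≠ 0 := by
    intro h; rw [h, map_zero] at hfq; rw [← hfq, mul_zero] at hq; exact hrne hq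
  have hfdeg : (f.natDegree : ℤ) ≤ N := by
    obtain ⟨n, rfl⟩ : ∃ n : ℕ, N = n := ⟨N.toNat, by omega⟩
    norm_cast
    rw [Polynomial.natDegree_le_iff_coeff_eq_zero]
    intro k hk
    rw [hf, Polynomial.coeff_contract hρ.ne', hqc]
    by_contra hne
    have h1 := (hrange _ hne).2.1
    zify at h1 hk
    nlinarith
  have hroot : ∃ a : L, a ≠ 0 ∧ r.IsRoot a := by
    have hdeg : q.degree ≠ 0 := by
      have h1 : q.coeff (e₂ - ν₂) ≠ 0 := by
        rw [hqc, Nat.sub_add_cancel hse.le]; exact hrE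
      have h2 := Polynomial.le_natDegree_of_ne_zero h1
      intro h3
      have := Polynomial.natDegree_eq_of_degree_eq_some (n := 0) h3
      omega
    obtain ⟨a, ha⟩ := IsAlgClosed.exists_root q hdeg
    refine ⟨a, ?_, ?_⟩
    · rintro rfl
      have : q.coeff 0 = 0 := by rw [Polynomial.coeff_zero_eq_eval_zero]; exact ha
      rw [hqc, zero_add] at this
      exact hrS this
    · rw [hq, Polynomial.IsRoot, Polynomial.eval_mul, ha, mul_zero]
  rcases univ_alt r g hrne hgne w u ρ (ρ + ς) hϱ.ne' i hi hu hϱς hw hode hroot with h0 | ⟨a, ha, hra, h1⟩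
  · right
    have hr0 : r.rootMultiplicity 0 = ν₂ := by
      rw [Polynomial.rootMultiplicity_eq_natTrailingDegree']
      apply le_antisymm (Polynomial.natTrailingDegree_le_of_ne_zero hrS)
      apply (hrange _ _).1
      exact Polynomial.trailingCoeff_nonzero_iff_nonzero.mpr hrne
    have hg0 : g.coeff (g.rootMultiplicity 0) ≠ 0 := by
      rw [Polynomial.rootMultiplicity_eq_natTrailingDegree']
      exact Polynomial.trailingCoeff_nonzero_iff_nonzero.mpr hgne
    obtain ⟨c, hc⟩ := ev_coeff_ne L G _ hg0
    generalize g.rootMultiplicity 0 = n at *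
    rw [hr0] at h0
    have hcw : (ρ : ℤ) * (c : ℤ) + ς * (n : ℤ) = w := by
      have := hGhom (d := Finsupp.single 0 c + Finsupp.single 1 n) hc
      rw [weight_two] at this
      simpa using this
    have hac : w * (υ₂ : ℤ) = u * c := by
      have : (ρ : ℤ) * (w * (υ₂ : ℤ)) = ρ * (u * c) := by
        linear_combination (-u) * hcw - w * hudef - ς * h0
      exact mul_left_cancel₀ hϱ.ne' this
    have hbez := Nat.gcd_eq_gcd_ab υ₂ ν₂
    set A := Nat.gcdA υ₂ ν₂
    set B := Nat.gcdB υ₂ ν₂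
    refine ⟨((i : ℤ) - 1) * (Nat.gcd υ₂ ν₂ : ℤ) - (A * c + B * n), ?_⟩
    linear_combination A * hac + B * h0 + w * hbez - (Nat.gcd υ₂ ν₂ : ℤ) * hw
  · left
    refine ⟨r.rootMultiplicity a, ((i : ℤ) - 1) * r.rootMultiplicity a - g.rootMultiplicity a,
      ?_, ?_, ?_⟩
    · exact (Polynomial.rootMultiplicity_pos hrne).mpr hra
    · rw [hgcdN]
      refine le_trans ?_ hfdeg
      have := mult_le f hfne ν₂ ρ hρ a ha
      rw [hfq, ← hq] at this
      exact_mod_cast this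
    · linear_combination h1 - (r.rootMultiplicity a : ℤ) * hw

/-- Proposition "finitas direcciones". -/
theorem stmt10 (K : Type*) [Field K] [CharZero K]
    (ϱ ς : ℤ) (hgcd : Int.gcd ϱ ς = 1) (hϱ : 0 < ϱ) (hϱς : ϱ + ς < 0)
    (R G : MvPolynomial (Fin 2) K)
    (hhomR : IsHomog ϱ ς R) (hhomG : IsHomog ϱ ς G)
    (hmono : ¬ IsMonomial R)
    (i : ℕ) (hi : 1 ≤ i) (hbr : Jb G R = R ^ i)
    (υ₂ ν₂ e₁ e₂ : ℕ) (hst : IsSt ϱ ς R (υ₂, ν₂)) (hen : IsEn ϱ ς R (e₁, e₂))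
    (ℓ : ℕ) (hℓ : 1 ≤ ℓ) (hℓu : 0 < (ℓ : ℤ) * wdeg ϱ ς R + ϱ + ς) :
    -- case (1)
    (ϱ = 1 ∧ ∃ (ξ lam : K) (j c : ℕ), ξ ≠ 0 ∧ lam ≠ 0 ∧ 1 ≤ j ∧
        R = MvPolynomial.C ξ * MvPolynomial.X 0 ^ c *
          (MvPolynomial.X 0 ^ (-ς).toNat * MvPolynomial.X 1 - MvPolynomial.C lam) ^ j) ∨
    -- case (2)
    (∃ s t' : ℕ, 1 ≤ s ∧ (s : ℤ) ≤ Int.gcd ((e₁ : ℤ) - (υ₂ : ℤ)) ((e₂ : ℤ) - (ν₂ : ℤ)) ∧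
        0 < t' ∧ (t' : ℤ) < (ℓ : ℤ) * s ∧
        (t' : ℤ) * (ϱ * (υ₂ : ℤ) + ς * (ν₂ : ℤ)) + (s : ℤ) * (ϱ + ς) = 0) ∨
    -- case (3)
    (∃ γ t' : ℕ, 1 ≤ γ ∧ γ ∣ Nat.gcd υ₂ ν₂ ∧
        0 < t' ∧ (t' : ℤ) < (ℓ : ℤ) * γ ∧
        (t' : ℤ) * (ϱ * (υ₂ : ℤ) + ς * (ν₂ : ℤ)) + (γ : ℤ) * (ϱ + ς) = 0) := by
  have hw' : ϱ * (υ₂ : ℤ) + ς * (ν₂ : ℤ) = wdeg ϱ ς R := hst.1.2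
  rw [← hw', add_assoc] at hℓu
  have hu : 0 < ϱ * (υ₂ : ℤ) + ς * (ν₂ : ℤ) := by
    have h1 : 0 < (ℓ : ℤ) * (ϱ * (υ₂ : ℤ) + ς * (ν₂ : ℤ)) := by linarith
    exact pos_of_mul_pos_right h1 (by positivity)
  rcases main_alt ϱ ς hgcd hϱ hϱς R G hhomR hhomG hmono i hi hbr υ₂ ν₂ e₁ e₂ hst hen hu with
    ⟨s, t, hs, hsN, h⟩ | ⟨t, h⟩
  · right; left
    obtain ⟨h1, h2⟩ := finish_arith _ _ _ _ ℓ hu hϱς (by exact_mod_cast hs) hℓu h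
    lift t to ℕ using h1.le
    exact ⟨s, t, hs, hsN, by exact_mod_cast h1, h2, h⟩
  · right; right
    have hg : 1 ≤ Nat.gcd υ₂ ν₂ := by
      rw [Nat.one_le_iff_ne_zero]
      intro h0
      rw [Nat.gcd_eq_zero_iff] at h0
      rw [h0.1, h0.2] at hu
      simp at hu
    obtain ⟨h1, h2⟩ := finish_arith _ _ _ _ ℓ hu hϱς (by exact_mod_cast hg) hℓu h
    lift t to ℕ using h1.le
    exact ⟨Nat.gcd υ₂ ν₂, t, hg, dvd_rfl, by exact_mod_cast h1, h2, h⟩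

end
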